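/- For any fixed x ∈ ℝ, the edge process N^n_{O,t} := O_{[⌊nt⌋/n, t]}(x) satisfies that n^{(1/2)(1 + 1/α)} N^n_{O,t} converges to zero in probability uniformly over compact time intervals as n → ∞. -/

import Mathlib

open MeasureTheory ProbabilityTheory Filter Topology UniformConvergence

noncomputable section

/-- A symmetric pure-jump `α`-stable Lévy process `X` with `α ∈ (1,2)`, scale `σ > 0`,
defined on a filtered probability space, together with its local time `L`.
`L a b x` is the local time of `X` at level `x` over the time interval `[a,b]`, defined
via the occupation density formula. -/
structure StableLevy (Ω : Type) [mΩ : MeasurableSpace Ω] where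
  P : Measure Ω
  isProb : IsProbabilityMeasure P
  Filt : Filtration ℝ mΩ
  α : ℝ
  σ : ℝ
  hα : α ∈ Set.Ioo (1 : ℝ) 2
  hσ : 0 < σ
  X : ℝ → Ω → ℝ
  measX : ∀ t : ℝ, Measurable (X t)
  adaptedX : ∀ t : ℝ, Measurable[Filt t] (X t)
  X0 : ∀ᵐ ω ∂P, X 0 ω = 0
  charFun : ∀ t : ℝ, 0 ≤ t → ∀ ξ : ℝ,
    ∫ ω, Complex.exp (Complex.I * (ξ : ℂ) * (X t ω : ℂ)) ∂P
      = (Real.exp (-(σ * t * |ξ| ^ α)) : ℂ)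
  statIncr : ∀ s t : ℝ, 0 ≤ s → s ≤ t →
    P.map (fun ω => X t ω - X s ω) = P.map (X (t - s))
  indepIncr : ∀ s t : ℝ, 0 ≤ s → s ≤ t →
    Indep (MeasurableSpace.comap (fun ω => X t ω - X s ω) inferInstance) (Filt s) P
  L : ℝ → ℝ → ℝ → Ω → ℝ
  measL : ∀ a b x : ℝ, Measurable (L a b x)
  occDensity : ∀ a b : ℝ, 0 ≤ a → a ≤ b → ∀ x : ℝ, ∀ᵐ ω ∂P,
    (∫ s in a..b, Set.indicator (Set.Ioi x) (fun _ => (1 : ℝ)) (X s ω))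
      = ∫ y in Set.Ioi x, L a b y ω

namespace StableLevy

variable {Ω : Type} [mΩ : MeasurableSpace Ω]

/-- The occupation time `O_{[a,b]}(x) = ∫_a^b 1_{(x,∞)}(X_s) ds`. -/
def occ (S : StableLevy Ω) (a b x : ℝ) (ω : Ω) : ℝ :=
  ∫ s in a..b, Set.indicator (Set.Ioi x) (fun _ => (1 : ℝ)) (S.X s ω)

/-- The σ-algebra `A_n = σ(X_{i/n} ; i ∈ ℕ)` generated by the discrete observations. -/
def An (S : StableLevy Ω) (n : ℕ) : MeasurableSpace Ω :=
  ⨆ i : ℕ, MeasurableSpace.comap (S.X ((i : ℝ) / n)) inferInstance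

/-- The σ-algebra generated by `X_1`. -/
def sigmaX1 (S : StableLevy Ω) : MeasurableSpace Ω :=
  MeasurableSpace.comap (S.X 1) inferInstance

/-- The first passage time of `X` over the level `q` (real-valued, with the usual
`sInf` junk value on the empty set). -/
def tau (S : StableLevy Ω) (q : ℝ) (ω : Ω) : ℝ :=
  sInf {t : ℝ | 0 ≤ t ∧ q < S.X t ω}

end StableLevy

/-!
An occupation time never exceeds the length of its time interval, and `[⌊nt⌋/n, t]` has length at
most `1/n`. Hence the edge process is at most `1/n` along every path and at every `t ≥ 0`, and
`n ^ γ` times it is at most `n ^ (γ - 1)`, which tends to zero as soon as `γ < 1`. For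
`γ = (1/2) (1 + 1/α)` this is the condition `α > 1`.
-/

section OrderedField

variable {K : Type*} [Field K] [LinearOrder K] [IsStrictOrderedRing K]

theorem abs_sub_natFloor_mul_div_le [FloorSemiring K] {r t : K} (hr : 0 < r)
    (ht : 0 ≤ t) : |t - (⌊r * t⌋₊ : K) / r| ≤ 1 / r := by
  have floor_le : (⌊r * t⌋₊ : K) / r ≤ t :=
    (div_le_iff₀' hr).2 (Nat.floor_le (mul_nonneg hr.le ht))
  have lt_floor_add_one : t < ((⌊r * t⌋₊ : K) + 1) / r :=
    (lt_div_iff₀' hr).2 (Nat.lt_floor_add_one (r * t))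
  rw [abs_of_nonneg (sub_nonneg.2 floor_le), sub_le_iff_le_add', ← add_div]
  exact lt_floor_add_one.le

theorem half_mul_one_add_one_div_lt_one {a : K} (ha : 1 < a) : (1 / 2) * (1 + 1 / a) < 1 := by
  have : 1 / a < 1 := (div_lt_one (zero_lt_one.trans ha)).2 ha
  linarith

end OrderedField

theorem tendsto_measure_le_biSup_of_tendstoUniformlyOn {ι τ Ω : Type*} [MeasurableSpace Ω]
    (μ : Measure Ω) {l : Filter ι} {F : ι → τ → Ω → ℝ} {I : Set τ}
    (hF : TendstoUniformlyOn (fun i (q : τ × Ω) => F i q.1 q.2) 0 l (I ×ˢ Set.univ))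
    {ε : ℝ} (hε : 0 < ε) :
    Tendsto (fun i => μ {ω | ε ≤ ⨆ t ∈ I, F i t ω}) l (𝓝 0) := by
  refine tendsto_const_nhds.congr' ?_
  filter_upwards [Metric.tendstoUniformlyOn_iff.1 hF (ε / 2) (half_pos hε)] with i hi
  have sup_lt (ω : Ω) : ⨆ t ∈ I, F i t ω < ε := by
    refine lt_of_le_of_lt (Real.iSup_le (fun t => Real.iSup_le (fun ht => ?_) ?_) ?_)
      (half_lt_self hε)
    · have abs_lt : |F i t ω| < ε / 2 := by simpa using hi (t, ω) ⟨ht, Set.mem_univ ω⟩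
      exact (le_abs_self _).trans abs_lt.le
    all_goals exact (half_pos hε).le
  simp only [(sup_lt _).not_ge, Set.ofPred_false, measure_empty]

section EdgeIntegral

variable {E : Type*} [NormedAddCommGroup E] [NormedSpace ℝ E]

/-- The edge process of the functional `t ↦ ∫₀ᵗ f` on the grid of mesh `1/r`: the part of the
integral accumulated since the last grid point `⌊rt⌋/r` before `t`. The rate `r` is real; outside
`0 < r` and `0 ≤ t` the truncated floor and `x / 0 = 0` make the lower limit a junk value. -/
def edgeIntegral (f : ℝ → E) (r t : ℝ) : E :=
  ∫ s in ((⌊r * t⌋₊ : ℝ) / r)..t, f s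

theorem norm_edgeIntegral_le {f : ℝ → E} {C : ℝ} (hf : ∀ s, ‖f s‖ ≤ C) {r t : ℝ} (hr : 0 < r)
    (ht : 0 ≤ t) : ‖edgeIntegral f r t‖ ≤ C / r :=
  calc ‖edgeIntegral f r t‖ ≤ C * |t - (⌊r * t⌋₊ : ℝ) / r| :=
        intervalIntegral.norm_integral_le_of_norm_le_const fun s _ => hf s
    _ ≤ C * (1 / r) :=
        mul_le_mul_of_nonneg_left (abs_sub_natFloor_mul_div_le hr ht) ((norm_nonneg _).trans (hf 0))
    _ = C / r := mul_one_div C r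

theorem tendstoUniformlyOn_rpow_mul_norm_edgeIntegral {ι : Type*} {f : ι → ℝ → E} {C : ℝ}
    (hf : ∀ i s, ‖f i s‖ ≤ C) {γ : ℝ} (hγ : γ < 1) :
    TendstoUniformlyOn (fun r (q : ℝ × ι) => r ^ γ * ‖edgeIntegral (f q.2) r q.1‖) 0 atTop
      (Set.Ici 0 ×ˢ Set.univ) := by
  have bound_tendsto : Tendsto (fun r : ℝ => C * r ^ (γ - 1)) atTop (𝓝 0) := by
    simpa only [neg_sub, mul_zero] using (tendsto_rpow_neg_atTop (sub_pos.2 hγ)).const_mul C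
  refine Metric.tendstoUniformlyOn_iff.2 fun ε hε => ?_
  filter_upwards [bound_tendsto.eventually_lt_const hε, eventually_gt_atTop 0] with r hrε hr q hq
  rw [Pi.zero_apply, dist_zero_left, Real.norm_of_nonneg (by positivity)]
  calc r ^ γ * ‖edgeIntegral (f q.2) r q.1‖ ≤ r ^ γ * (C / r) :=
        mul_le_mul_of_nonneg_left (norm_edgeIntegral_le (hf q.2) hr hq.1) (Real.rpow_nonneg hr.le γ)
    _ = C * r ^ (γ - 1) := by rw [Real.rpow_sub_one hr.ne']; ring
    _ < ε := hrε

end EdgeIntegral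

theorem edge_process_occupation_time_general {Ω E : Type*} [MeasurableSpace Ω] (μ : Measure Ω)
    (X : ℝ → Ω → E) (A : Set E) {γ : ℝ} (hγ : γ < 1) {I : Set ℝ} (hI : I ⊆ Set.Ici 0)
    {ε : ℝ} (hε : 0 < ε) :
    Tendsto (fun n : ℕ => μ {ω | ε ≤ ⨆ t ∈ I, (n : ℝ) ^ γ *
        |edgeIntegral (fun s => A.indicator (fun _ => (1 : ℝ)) (X s ω)) n t|})
      atTop (𝓝 0) := by
  have indicator_le (ω : Ω) (s : ℝ) : ‖A.indicator (fun _ => (1 : ℝ)) (X s ω)‖ ≤ 1 :=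
    (norm_indicator_le_norm_self _ _).trans_eq norm_one
  have uniform := (tendstoUniformlyOn_rpow_mul_norm_edgeIntegral indicator_le hγ).mono
    (Set.prod_mono_left hI)
  exact (tendsto_measure_le_biSup_of_tendstoUniformlyOn μ
    (F := fun r t ω => r ^ γ * ‖edgeIntegral (fun s => A.indicator (fun _ => (1 : ℝ)) (X s ω)) r t‖)
    uniform hε).comp tendsto_natCast_atTop_atTop

/-- the edge process `N^n_{O,t} = O_{[⌊nt⌋/n, t]}(x)` satisfies that
`n^{(1/2)(1+1/α)} N^n_{O,t}` converges to zero in probability uniformly over compact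
time intervals. -/
theorem edge_process_occupation_time {Ω : Type} [mΩ : MeasurableSpace Ω]
    (S : StableLevy Ω) (x : ℝ) :
    ∀ T : ℝ, 0 < T → ∀ ε : ℝ, 0 < ε →
      Tendsto (fun n : ℕ =>
          S.P {ω | ε ≤ ⨆ t ∈ Set.Icc (0 : ℝ) T,
            (n : ℝ) ^ ((1 / 2 : ℝ) * (1 + 1 / S.α)) *
              |S.occ ((⌊(n : ℝ) * t⌋₊ : ℝ) / n) t x ω|})
        atTop (𝓝 0) := by
  intro T _ ε hε
  exact edge_process_occupation_time_general S.P S.X (Set.Ioi x)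
    (half_mul_one_add_one_div_lt_one S.hα.1) Set.Icc_subset_Ici_self hε

end
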